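/- Let X₁, X₂, … be i.i.d. real random variables with mean 0 and variance 1, S̄_n := max_{1≤k≤n} (X₁+…+X_k), and x⁺ := max(x,0). Then the family of random variables { (S̄_n⁺/√n)² : n ∈ ℕ } is uniformly integrable, i.e. for every ε > 0 there exists K > 0 such that E[(S̄_n⁺/√n)² · 1_{(S̄_n⁺/√n)² > K}] ≤ ε for all n ∈ ℕ. -/

import Mathlib

open MeasureTheory ProbabilityTheory Filter
open scoped ENNReal

namespace Stmt19Aux

/-- partial sums of a sequence -/
noncomputable def S (k : ℕ) (w : ℕ → ℝ) : ℝ := ∑ i ∈ Finset.range k, w i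

/-- running maximum of partial sums (including zero) -/
noncomputable def M : ℕ → (ℕ → ℝ) → ℝ
  | 0, _ => 0
  | k + 1, w => max (M k w) (S (k + 1) w)

lemma S_succ (k : ℕ) (w : ℕ → ℝ) : S (k + 1) w = S k w + w k := by
  simp [S, Finset.sum_range_succ]

lemma M_succ (k : ℕ) (w : ℕ → ℝ) : M (k + 1) w = max (M k w) (S (k + 1) w) := rfl

lemma M_nonneg (k : ℕ) (w : ℕ → ℝ) : 0 ≤ M k w := by
  induction k with
  | zero => simp [M]
  | succ k ih => rw [M_succ]; exact le_max_of_le_left ih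

lemma S_le_M (n k : ℕ) (h : k ≤ n) (w : ℕ → ℝ) : S k w ≤ M n w := by
  induction n with
  | zero => obtain rfl : k = 0 := by omega
            simp [M, S]
  | succ n ih =>
    rw [M_succ]
    rcases Nat.lt_or_ge n k with h1 | h1
    · obtain rfl : k = n + 1 := by omega
      exact le_max_right _ _
    · exact le_max_of_le_left (ih h1)

lemma M_le (n : ℕ) (w : ℕ → ℝ) (c : ℝ) (hc : 0 ≤ c)
    (h : ∀ k, 1 ≤ k → k ≤ n → S k w ≤ c) : M n w ≤ c := by
  induction n with
  | zero => simpa [M]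
  | succ n ih =>
    rw [M_succ]
    exact max_le (ih fun k h1 h2 => h k h1 (by omega)) (h _ (by omega) le_rfl)

lemma measurable_S (k : ℕ) : Measurable (S k) := by
  unfold S; fun_prop

lemma measurable_M (k : ℕ) : Measurable (M k) := by
  induction k with
  | zero => exact measurable_const
  | succ k ih => exact ih.max (measurable_S (k + 1))

lemma S_congr (k : ℕ) (w v : ℕ → ℝ) (h : ∀ i < k, w i = v i) : S k w = S k v :=
  Finset.sum_congr rfl fun i hi => h i (Finset.mem_range.mp hi)

lemma M_congr (k : ℕ) (w v : ℕ → ℝ) (h : ∀ i < k, w i = v i) : M k w = M k v := by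
  induction k with
  | zero => rfl
  | succ k ih =>
    rw [M_succ, M_succ, ih fun i hi => h i (by omega), S_congr _ _ _ h]

lemma abs_S_le (k : ℕ) (w : ℕ → ℝ) : |S k w| ≤ ∑ i ∈ Finset.range k, |w i| :=
  Finset.abs_sum_le_sum_abs _ _

lemma abs_M_le (n : ℕ) (w : ℕ → ℝ) : |M n w| ≤ ∑ i ∈ Finset.range n, |w i| := by
  rw [abs_of_nonneg (M_nonneg _ _)]
  refine M_le _ _ _ (Finset.sum_nonneg fun _ _ => abs_nonneg _) fun k _ hk => ?_
  refine (le_abs_self _).trans ((abs_S_le k w).trans ?_)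
  exact Finset.sum_le_sum_of_subset_of_nonneg (Finset.range_mono hk) fun _ _ _ => abs_nonneg _

lemma M_add_le (n : ℕ) (y z : ℕ → ℝ) : M n (fun i => y i + z i) ≤ M n y + M n z := by
  refine M_le _ _ _ (add_nonneg (M_nonneg _ _) (M_nonneg _ _)) fun k _ hk => ?_
  have : S k (fun i => y i + z i) = S k y + S k z := by simp [S, Finset.sum_add_distrib]
  rw [this]
  exact add_le_add (S_le_M _ _ hk _) (S_le_M _ _ hk _)

lemma path2 (n : ℕ) (w : ℕ → ℝ) :
    M n w ^ 2 ≤ 4 * S n w ^ 2 - 4 * ∑ k ∈ Finset.range n, M k w * w k := by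
  have key : M n w ^ 2 - 2 * M n w * S n w + 2 * ∑ k ∈ Finset.range n, M k w * w k ≤ 0 := by
    induction n with
    | zero => simp [M]
    | succ n ih =>
      rw [Finset.sum_range_succ, M_succ]
      have hs := S_succ n w
      rcases le_total (S (n + 1) w) (M n w) with h | h
      · rw [max_eq_left h, hs]; nlinarith
      · rw [max_eq_right h]
        have : w n = S (n + 1) w - S n w := by linarith
        rw [this]
        nlinarith [sq_nonneg (S (n + 1) w - M n w)]
  nlinarith [sq_nonneg (M n w - 2 * S n w)]

lemma path4 (n : ℕ) (w : ℕ → ℝ) :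
    M n w ^ 4 ≤ 8 * S n w ^ 4 - 4 * ∑ k ∈ Finset.range n, M k w ^ 3 * w k := by
  have key : 3 * M n w ^ 4 - 4 * M n w ^ 3 * S n w
      + 4 * ∑ k ∈ Finset.range n, M k w ^ 3 * w k ≤ 0 := by
    induction n with
    | zero => simp [M]
    | succ n ih =>
      rw [Finset.sum_range_succ, M_succ]
      have hs := S_succ n w
      rcases le_total (S (n + 1) w) (M n w) with h | h
      · rw [max_eq_left h, hs]; nlinarith
      · rw [max_eq_right h]
        have : w n = S (n + 1) w - S n w := by linarith
        rw [this]
        generalize S (n + 1) w = s at *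
        generalize M n w = m at *
        have : s ^ 4 + 3 * m ^ 4 - 4 * s * m ^ 3 = (s - m) ^ 2 * ((s + m) ^ 2 + 2 * m ^ 2) := by
          ring
        have h2 : 0 ≤ (s - m) ^ 2 * ((s + m) ^ 2 + 2 * m ^ 2) := by positivity
        nlinarith
  generalize S n w = s at *
  generalize M n w = m at *
  have : 2 * m ^ 4 - 4 * m ^ 3 * s + 8 * s ^ 4
    = 2 * (m ^ 2 - m * s - s ^ 2) ^ 2 + 2 * s ^ 2 * (m - s) ^ 2 + 4 * s ^ 4 := by ring
  have h2 : 0 ≤ 2 * (m ^ 2 - m * s - s ^ 2) ^ 2 + 2 * s ^ 2 * (m - s) ^ 2 + 4 * s ^ 4 := by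
    positivity
  linarith

variable {Ω : Type*} [MeasurableSpace Ω] {μ : Measure Ω} [IsProbabilityMeasure μ]

lemma indep_past (W : ℕ → Ω → ℝ) (hm : ∀ i, Measurable (W i)) (hi : iIndepFun W μ)
    (F : (ℕ → ℝ) → ℝ) (hF : Measurable F) (k : ℕ)
    (hc : ∀ w v : ℕ → ℝ, (∀ i < k, w i = v i) → F w = F v)
    (G : ℝ → ℝ) (hG : Measurable G) :
    IndepFun (fun ω => F (fun i => W i ω)) (fun ω => G (W k ω)) μ := by
  have h := hi.indepFun_finset (Finset.range k) {k} (by simp) hm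
  let φ : ((i : Finset.range k) → ℝ) → ℝ :=
    fun u => F (fun i => if h : i ∈ Finset.range k then u ⟨i, h⟩ else 0)
  have hφ : Measurable φ := by
    refine hF.comp (measurable_pi_lambda _ fun i => ?_)
    by_cases h : i ∈ Finset.range k
    · simp only [h, dite_true]; exact measurable_pi_apply _
    · simp only [h, dite_false]; exact measurable_const
  let ψ : ((i : ({k} : Finset ℕ)) → ℝ) → ℝ := fun u => G (u ⟨k, by simp⟩)
  have hψ : Measurable ψ := hG.comp (measurable_pi_apply _)
  have h2 := h.comp hφ hψ
  have e : (fun ω => F (fun i => W i ω)) =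
      φ ∘ (fun ω (i : Finset.range k) => W i ω) := by
    funext ω
    refine hc _ _ fun i hi => ?_
    simp [hi]
  rw [e]
  exact h2

lemma L2max (W : ℕ → Ω → ℝ) (hm : ∀ i, Measurable (W i)) (hi : iIndepFun W μ)
    (hL : ∀ i, MemLp (W i) 2 μ) (h0 : ∀ i, ∫ ω, W i ω ∂μ = 0) (δ : ℝ)
    (hδ : ∀ i, ∫ ω, W i ω ^ 2 ∂μ ≤ δ) (n : ℕ) :
    Integrable (fun ω => M n (fun i => W i ω) ^ 2) μ ∧
      ∫ ω, M n (fun i => W i ω) ^ 2 ∂μ ≤ 4 * (n * δ) := by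
  have hW : Measurable fun ω i => W i ω := measurable_pi_lambda _ hm
  have hsum : ∀ k, MemLp (fun ω => ∑ i ∈ Finset.range k, |W i ω|) 2 μ := fun k =>
    memLp_finsetSum _ fun i _ => (hL i).abs
  have hM : ∀ k, MemLp (fun ω => M k (fun i => W i ω)) 2 μ := fun k =>
    (hsum k).mono ((measurable_M k).comp hW).aestronglyMeasurable (ae_of_all _ fun ω => by
      simpa only [Real.norm_eq_abs] using (abs_M_le k _).trans (le_abs_self _))
  have hS : ∀ k, MemLp (fun ω => S k (fun i => W i ω)) 2 μ := fun k =>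
    (hsum k).mono ((measurable_S k).comp hW).aestronglyMeasurable (ae_of_all _ fun ω => by
      simpa only [Real.norm_eq_abs] using (abs_S_le k _).trans (le_abs_self _))
  have hMW : ∀ k, Integrable (fun ω => M k (fun i => W i ω) * W k ω) μ := fun k =>
    (hM k).integrable_mul (hL k)
  have hSW : ∀ k, Integrable (fun ω => S k (fun i => W i ω) * W k ω) μ := fun k =>
    (hS k).integrable_mul (hL k)
  have hMW0 : ∀ k, ∫ ω, M k (fun i => W i ω) * W k ω ∂μ = 0 := fun k => by
    have := indep_past W hm hi (M k) (measurable_M k) k (M_congr k) id measurable_id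
    have h := this.integral_fun_mul_eq_mul_integral (hM k).1 (hL k).1
    simp only [id] at h
    rw [h, h0, mul_zero]
  have hSW0 : ∀ k, ∫ ω, S k (fun i => W i ω) * W k ω ∂μ = 0 := fun k => by
    have := indep_past W hm hi (S k) (measurable_S k) k (S_congr k) id measurable_id
    have h := this.integral_fun_mul_eq_mul_integral (hS k).1 (hL k).1
    simp only [id] at h
    rw [h, h0, mul_zero]
  have hSE : ∀ k : ℕ, ∫ ω, S k (fun i => W i ω) ^ 2 ∂μ ≤ k * δ := by
    intro k
    induction k with
    | zero => simp [S]
    | succ k ih =>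
      have : ∀ ω, S (k + 1) (fun i => W i ω) ^ 2 = S k (fun i => W i ω) ^ 2
          + 2 * (S k (fun i => W i ω) * W k ω) + W k ω ^ 2 := fun ω => by
        rw [S_succ]; ring
      simp_rw [this]
      rw [integral_add, integral_add, integral_const_mul, hSW0]
      · push_cast; linarith [hδ k]
      · exact (hS k).integrable_sq
      · exact (hSW k).const_mul 2
      · exact (hS k).integrable_sq.add ((hSW k).const_mul 2)
      · exact (hL k).integrable_sq
  refine ⟨(hM n).integrable_sq, ?_⟩
  have hsumI : Integrable (fun ω => ∑ k ∈ Finset.range n, M k (fun i => W i ω) * W k ω) μ :=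
    integrable_finsetSum _ fun k _ => hMW k
  calc _ ≤ ∫ ω, (4 * S n (fun i => W i ω) ^ 2
          - 4 * ∑ k ∈ Finset.range n, M k (fun i => W i ω) * W k ω) ∂μ :=
        integral_mono (hM n).integrable_sq
          (((hS n).integrable_sq.const_mul 4).sub (hsumI.const_mul 4)) fun ω => path2 n _
    _ = 4 * ∫ ω, S n (fun i => W i ω) ^ 2 ∂μ := by
        rw [integral_sub ((hS n).integrable_sq.const_mul 4) (hsumI.const_mul 4),
          integral_const_mul, integral_const_mul, integral_finsetSum _ fun k _ => hMW k]
        simp [hMW0]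
    _ ≤ _ := by linarith [hSE n]

lemma L4max (W : ℕ → Ω → ℝ) (hm : ∀ i, Measurable (W i)) (hi : iIndepFun W μ)
    (B : ℝ) (hB : ∀ i ω, |W i ω| ≤ B) (h0 : ∀ i, ∫ ω, W i ω ∂μ = 0) (n : ℕ) :
    Integrable (fun ω => M n (fun i => W i ω) ^ 4) μ ∧
      ∫ ω, M n (fun i => W i ω) ^ 4 ∂μ ≤ 24 * B ^ 4 * n ^ 2 := by
  have hW : Measurable fun ω i => W i ω := measurable_pi_lambda _ hm
  have hsum : ∀ k ω, ∑ i ∈ Finset.range k, |W i ω| ≤ k * B := fun k ω => by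
    simpa using Finset.sum_le_card_nsmul (Finset.range k) (fun i => |W i ω|) B fun i _ => hB i ω
  have hMb : ∀ k ω, |M k (fun i => W i ω)| ≤ k * B := fun k ω => (abs_M_le _ _).trans (hsum k ω)
  have hSb : ∀ k ω, |S k (fun i => W i ω)| ≤ k * B := fun k ω => (abs_S_le _ _).trans (hsum k ω)
  have hMm : ∀ k, Measurable fun ω => M k (fun i => W i ω) := fun k => (measurable_M k).comp hW
  have hSm : ∀ k, Measurable fun ω => S k (fun i => W i ω) := fun k => (measurable_S k).comp hW
  have gen : ∀ (f g : Ω → ℝ) (a b : ℝ) (p q : ℕ), Measurable f → Measurable g →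
      (∀ ω, |f ω| ≤ a) → (∀ ω, |g ω| ≤ b) → Integrable (fun ω => f ω ^ p * g ω ^ q) μ := by
    intro f g a b p q hf hg ha hb
    refine Integrable.of_bound (C := a ^ p * b ^ q)
      ((hf.pow_const p).mul (hg.pow_const q)).aestronglyMeasurable (ae_of_all _ fun ω => ?_)
    rw [Real.norm_eq_abs, abs_mul, abs_pow, abs_pow]
    have h1 := pow_le_pow_left₀ (abs_nonneg _) (ha ω) p
    have h2 := pow_le_pow_left₀ (abs_nonneg _) (hb ω) q
    exact mul_le_mul h1 h2 (by positivity) ((by positivity : 0 ≤ |f ω| ^ p).trans h1)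
  have hSW : ∀ k p q, Integrable (fun ω => S k (fun i => W i ω) ^ p * W k ω ^ q) μ :=
    fun k p q => gen _ _ _ _ p q (hSm k) (hm k) (hSb k) (hB k)
  have hMW : ∀ k p q, Integrable (fun ω => M k (fun i => W i ω) ^ p * W k ω ^ q) μ :=
    fun k p q => gen _ _ _ _ p q (hMm k) (hm k) (hMb k) (hB k)
  have hMWE : ∀ k p q, ∫ ω, M k (fun i => W i ω) ^ p * W k ω ^ q ∂μ
      = (∫ ω, M k (fun i => W i ω) ^ p ∂μ) * ∫ ω, W k ω ^ q ∂μ := fun k p q =>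
    (indep_past W hm hi (fun w => M k w ^ p) ((measurable_M k).pow_const p) k
      (fun w v h => by simp only [M_congr k w v h]) (fun x => x ^ q)
      (measurable_id.pow_const q)).integral_fun_mul_eq_mul_integral
      ((hMm k).pow_const p).aestronglyMeasurable ((hm k).pow_const q).aestronglyMeasurable
  have hSWE : ∀ k p q, ∫ ω, S k (fun i => W i ω) ^ p * W k ω ^ q ∂μ
      = (∫ ω, S k (fun i => W i ω) ^ p ∂μ) * ∫ ω, W k ω ^ q ∂μ := fun k p q =>
    (indep_past W hm hi (fun w => S k w ^ p) ((measurable_S k).pow_const p) k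
      (fun w v h => by simp only [S_congr k w v h]) (fun x => x ^ q)
      (measurable_id.pow_const q)).integral_fun_mul_eq_mul_integral
      ((hSm k).pow_const p).aestronglyMeasurable ((hm k).pow_const q).aestronglyMeasurable
  have hWi : ∀ k q, Integrable (fun ω => W k ω ^ q) μ := fun k q => by simpa using hSW k 0 q
  have hSi : ∀ k p, Integrable (fun ω => S k (fun i => W i ω) ^ p) μ := fun k p => by
    simpa using hSW k p 0
  have hMi : ∀ k p, Integrable (fun ω => M k (fun i => W i ω) ^ p) μ := fun k p => by
    simpa using hMW k p 0
  have hWq : ∀ k q, |∫ ω, W k ω ^ q ∂μ| ≤ B ^ q := fun k q => by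
    have := norm_integral_le_of_norm_le_const (μ := μ) (f := fun ω => W k ω ^ q) (C := B ^ q)
      (ae_of_all _ fun ω => by
        rw [Real.norm_eq_abs, abs_pow]
        exact pow_le_pow_left₀ (abs_nonneg _) (hB k ω) q)
    simpa using this
  have hW1 : ∀ k, ∫ ω, W k ω ^ 1 ∂μ = 0 := fun k => by simpa using h0 k
  have hS1 : ∀ k, ∫ ω, S k (fun i => W i ω) ^ 1 ∂μ = 0 := fun k => by
    simp only [pow_one, S]
    rw [integral_finsetSum _ fun i _ => by simpa using hWi i 1]
    simp [h0]
  have hS2 : ∀ k : ℕ, ∫ ω, S k (fun i => W i ω) ^ 2 ∂μ ≤ k * B ^ 2 := by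
    intro k
    induction k with
    | zero => simp [S]
    | succ k ih =>
      have : ∀ ω, S (k + 1) (fun i => W i ω) ^ 2 = S k (fun i => W i ω) ^ 2
          + 2 * (S k (fun i => W i ω) ^ 1 * W k ω ^ 1) + W k ω ^ 2 := fun ω => by
        rw [S_succ]; ring
      simp_rw [this]
      rw [integral_add ((hSi k 2).fun_add ((hSW k 1 1).const_mul 2)) (hWi k 2),
        integral_add (hSi k 2) ((hSW k 1 1).const_mul 2), integral_const_mul, hSWE, hW1]
      push_cast; linarith [(abs_le.mp (hWq k 2)).2]
  have hS4 : ∀ k : ℕ, ∫ ω, S k (fun i => W i ω) ^ 4 ∂μ ≤ 3 * B ^ 4 * k ^ 2 := by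
    intro k
    induction k with
    | zero => simp [S]
    | succ k ih =>
      have : ∀ ω, S (k + 1) (fun i => W i ω) ^ 4 = S k (fun i => W i ω) ^ 4
          + 4 * (S k (fun i => W i ω) ^ 3 * W k ω ^ 1)
          + 6 * (S k (fun i => W i ω) ^ 2 * W k ω ^ 2)
          + 4 * (S k (fun i => W i ω) ^ 1 * W k ω ^ 3) + W k ω ^ 4 := fun ω => by
        rw [S_succ]; ring
      simp_rw [this]
      have i1 := (hSi k 4).fun_add ((hSW k 3 1).const_mul 4)
      have i2 := i1.fun_add ((hSW k 2 2).const_mul 6)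
      have i3 := i2.fun_add ((hSW k 1 3).const_mul 4)
      rw [integral_add i3 (hWi k 4), integral_add i2 ((hSW k 1 3).const_mul 4),
        integral_add i1 ((hSW k 2 2).const_mul 6),
        integral_add (hSi k 4) ((hSW k 3 1).const_mul 4),
        integral_const_mul, integral_const_mul, integral_const_mul, hSWE, hSWE, hSWE, hW1, hS1]
      have e4 := (abs_le.mp (hWq k 4)).2
      have e2 := (abs_le.mp (hWq k 2)).2
      have e2' : 0 ≤ ∫ ω, W k ω ^ 2 ∂μ := integral_nonneg fun ω => sq_nonneg _
      have := mul_le_mul (hS2 k) e2 e2' (by positivity)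
      push_cast
      nlinarith [(by positivity : 0 ≤ B ^ 4)]
  refine ⟨hMi n 4, ?_⟩
  have hMW' : ∀ k, Integrable (fun ω => M k (fun i => W i ω) ^ 3 * W k ω) μ := fun k => by
    simpa using hMW k 3 1
  have hMW0 : ∀ k, ∫ ω, M k (fun i => W i ω) ^ 3 * W k ω ∂μ = 0 := fun k => by
    have := hMWE k 3 1
    rw [hW1, mul_zero] at this
    simpa using this
  have hsumI : Integrable (fun ω => ∑ k ∈ Finset.range n, M k (fun i => W i ω) ^ 3 * W k ω) μ :=
    integrable_finsetSum _ fun k _ => hMW' k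
  calc _ ≤ ∫ ω, (8 * S n (fun i => W i ω) ^ 4
          - 4 * ∑ k ∈ Finset.range n, M k (fun i => W i ω) ^ 3 * W k ω) ∂μ :=
        integral_mono (hMi n 4)
          (((hSi n 4).const_mul 8).sub (hsumI.const_mul 4)) fun ω => path4 n _
    _ = 8 * ∫ ω, S n (fun i => W i ω) ^ 4 ∂μ := by
        rw [integral_sub ((hSi n 4).const_mul 8) (hsumI.const_mul 4),
          integral_const_mul, integral_const_mul, integral_finsetSum _ fun k _ => hMW' k]
        simp [hMW0]
    _ ≤ _ := by linarith [hS4 n]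

/-- truncation: for small tail variance -/
lemma trunc (ξ : Ω → ℝ) (hm : Measurable ξ) (hL : MemLp ξ 2 μ) (δ : ℝ) (hδ : 0 < δ) :
    ∃ T : ℝ, 0 ≤ T ∧ ∫ ω, (if |ξ ω| ≤ T then 0 else ξ ω) ^ 2 ∂μ ≤ δ := by
  have : Tendsto (fun T : ℕ => ∫ ω, (if |ξ ω| ≤ (T : ℝ) then 0 else ξ ω) ^ 2 ∂μ) atTop
      (nhds (∫ _, (0 : ℝ) ∂μ)) := by
    refine tendsto_integral_of_dominated_convergence (fun ω => ξ ω ^ 2) ?_ hL.integrable_sq ?_ ?_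
    · intro T
      exact ((Measurable.ite (measurableSet_le (by fun_prop) measurable_const)
        measurable_const hm).pow_const 2).aestronglyMeasurable
    · intro T
      refine ae_of_all _ fun ω => ?_
      split_ifs
      · simpa using sq_nonneg _
      · simp
    · refine ae_of_all _ fun ω => ?_
      refine tendsto_const_nhds.congr' ?_
      obtain ⟨N, hN⟩ := exists_nat_ge |ξ ω|
      filter_upwards [eventually_ge_atTop N] with T hT
      rw [if_pos (hN.trans (by exact_mod_cast hT))]
      simp
  rw [integral_zero] at this
  obtain ⟨T, hT⟩ := (this.eventually (ge_mem_nhds hδ)).exists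
  exact ⟨T, Nat.cast_nonneg _, hT⟩

end Stmt19Aux
/-- Uniform integrability of the family `{(S̄ₙ⁺/√n)² : n ≥ 1}`: for every `ε > 0`
there is `K > 0` with `E[(S̄ₙ⁺/√n)² 1_{(S̄ₙ⁺/√n)² > K}] ≤ ε` for all `n ≥ 1`. -/
theorem stmt19 {Ω : Type*} [MeasureSpace Ω] [IsProbabilityMeasure (ℙ : Measure Ω)]
    (X : ℕ → Ω → ℝ) (hmeas : ∀ i, Measurable (X i))
    (hindep : iIndepFun X ℙ)
    (hident : ∀ i, Measure.map (X i) ℙ = Measure.map (X 0) ℙ)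
    (hL2 : MemLp (X 0) 2 ℙ)
    (hmean : ∫ ω, X 0 ω ∂ℙ = 0)
    (hvar : ∫ ω, (X 0 ω) ^ 2 ∂ℙ = 1)
    (Sbar : ℕ → Ω → ℝ)
    (hSbar : ∀ n, ∀ hn : 1 ≤ n, ∀ ω, Sbar n ω =
      (Finset.Icc 1 n).sup' (Finset.nonempty_Icc.mpr hn)
        (fun k => ∑ i ∈ Finset.range k, X i ω)) :
    ∀ ε > (0 : ℝ), ∃ K > (0 : ℝ), ∀ n, 1 ≤ n →
      ∫ ω in {ω | (max (Sbar n ω) 0 / Real.sqrt n) ^ 2 > K},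
        (max (Sbar n ω) 0 / Real.sqrt n) ^ 2 ∂ℙ ≤ ε := by
  intro ε hε
  obtain ⟨T, hT0, hT⟩ := Stmt19Aux.trunc (X 0) (hmeas 0) hL2 (ε / 32) (by positivity)
  -- truncation functions
  let a : ℝ → ℝ := fun x => if |x| ≤ T then x else 0
  let b : ℝ → ℝ := fun x => if |x| ≤ T then 0 else x
  have hTm : MeasurableSet {x : ℝ | |x| ≤ T} := measurableSet_le (by fun_prop) measurable_const
  have ham : Measurable a := Measurable.ite hTm measurable_id measurable_const
  have hbm : Measurable b := Measurable.ite hTm measurable_const measurable_id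
  have hab : ∀ x, a x + b x = x := fun x => by simp only [a, b]; split_ifs <;> simp
  have haT : ∀ x, |a x| ≤ T := fun x => by
    simp only [a]; split_ifs with h
    · exact h
    · simpa
  have hbx : ∀ x, |b x| ≤ |x| := fun x => by
    simp only [b]; split_ifs <;> simp
  have hX0i : Integrable (X 0) ℙ := hL2.integrable (by norm_num)
  have haL : MemLp (fun ω => a (X 0 ω)) 2 ℙ :=
    MemLp.of_bound (ham.comp (hmeas 0)).aestronglyMeasurable T (ae_of_all _ fun ω => haT _)
  have hbL : MemLp (fun ω => b (X 0 ω)) 2 ℙ :=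
    hL2.mono (hbm.comp (hmeas 0)).aestronglyMeasurable (ae_of_all _ fun ω => hbx _)
  have hai := haL.integrable (by norm_num)
  have hbi := hbL.integrable (by norm_num)
  let m : ℝ := ∫ ω, a (X 0 ω) ∂ℙ
  have hbint : ∫ ω, b (X 0 ω) ∂ℙ = - m := by
    have : ∫ ω, (a (X 0 ω) + b (X 0 ω)) ∂ℙ = 0 := by simpa only [hab] using hmean
    rw [integral_add hai hbi] at this
    simp only [m]; linarith
  have hmT : |m| ≤ T := by
    have := norm_integral_le_of_norm_le_const (μ := (ℙ : Measure Ω)) (f := fun ω => a (X 0 ω))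
      (C := T) (ae_of_all _ fun ω => haT _)
    simpa using this
  have hid : ∀ i, IdentDistrib (X i) (X 0) ℙ ℙ := fun i =>
    ⟨(hmeas i).aemeasurable, (hmeas 0).aemeasurable, hident i⟩
  let φ : ℝ → ℝ := fun x => a x - m
  let ψ : ℝ → ℝ := fun x => b x + m
  have hφ : Measurable φ := ham.sub_const m
  have hψ : Measurable ψ := hbm.add_const m
  let Y : ℕ → Ω → ℝ := fun i ω => φ (X i ω)
  let Z : ℕ → Ω → ℝ := fun i ω => ψ (X i ω)
  have hYi : iIndepFun Y ℙ := hindep.comp (fun _ => φ) fun _ => hφ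
  have hZi : iIndepFun Z ℙ := hindep.comp (fun _ => ψ) fun _ => hψ
  have hY0 : ∀ i, ∫ ω, Y i ω ∂ℙ = 0 := fun i => by
    have h : ∫ ω, Y i ω ∂ℙ = ∫ ω, Y 0 ω ∂ℙ := ((hid i).comp hφ).integral_eq
    rw [h]
    simp only [Y, φ]
    rw [integral_sub hai (integrable_const _)]
    simp [m]
  have hZ0 : ∀ i, ∫ ω, Z i ω ∂ℙ = 0 := fun i => by
    have h : ∫ ω, Z i ω ∂ℙ = ∫ ω, Z 0 ω ∂ℙ := ((hid i).comp hψ).integral_eq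
    rw [h]
    simp only [Z, ψ]
    rw [integral_add hbi (integrable_const _), hbint]
    simp
  have hZL : ∀ i, MemLp (Z i) 2 ℙ := fun i =>
    ((hid i).comp hψ).symm.memLp_snd (hbL.add (memLp_const m))
  have hZ2 : ∀ i, ∫ ω, Z i ω ^ 2 ∂ℙ ≤ ε / 32 := fun i => by
    have h : ∫ ω, Z i ω ^ 2 ∂ℙ = ∫ ω, Z 0 ω ^ 2 ∂ℙ :=
      ((hid i).comp (hψ.pow_const 2)).integral_eq
    rw [h]
    have e : ∀ ω, Z 0 ω ^ 2 = b (X 0 ω) ^ 2 + (2 * m) * b (X 0 ω) + m ^ 2 := fun ω => by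
      simp only [Z, ψ]; ring
    simp_rw [e]
    rw [integral_add (hbL.integrable_sq.fun_add (hbi.const_mul _)) (integrable_const _),
      integral_add hbL.integrable_sq (hbi.const_mul _), integral_const_mul, hbint]
    have : ∫ ω, b (X 0 ω) ^ 2 ∂ℙ ≤ ε / 32 := hT
    simp
    nlinarith [sq_nonneg m]
  have hYB : ∀ i ω, |Y i ω| ≤ 2 * T := fun i ω => by
    have h1 := abs_le.mp (haT (X i ω))
    have h2 := abs_le.mp hmT
    simp only [Y, φ]
    exact abs_le.mpr ⟨by linarith, by linarith⟩
  have hYm : ∀ i, Measurable (Y i) := fun i => hφ.comp (hmeas i)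
  have hZm : ∀ i, Measurable (Z i) := fun i => hψ.comp (hmeas i)
  let C : ℝ := 24 * (2 * T) ^ 4
  have hC : 0 ≤ C := by positivity
  refine ⟨(32 * C + 1) / ε, by positivity, fun n hn => ?_⟩
  set K : ℝ := (32 * C + 1) / ε with hK
  have hKpos : 0 < K := by positivity
  obtain ⟨iY, bY⟩ := Stmt19Aux.L4max Y hYm hYi (2 * T) hYB hY0 n
  obtain ⟨iZ, bZ⟩ := Stmt19Aux.L2max Z hZm hZi hZL hZ0 (ε / 32) hZ2 n
  have hn0 : (0 : ℝ) < n := by exact_mod_cast hn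
  have hmax : ∀ ω, max (Sbar n ω) 0 = Stmt19Aux.M n (fun i => X i ω) := fun ω => by
    rw [hSbar n hn ω]
    apply le_antisymm
    · refine max_le (Finset.sup'_le _ _ fun k hk => ?_) (Stmt19Aux.M_nonneg _ _)
      exact Stmt19Aux.S_le_M n k (Finset.mem_Icc.mp hk).2 _
    · refine Stmt19Aux.M_le _ _ _ (le_max_right _ _) fun k h1 h2 => le_max_of_le_left ?_
      exact Finset.le_sup' (fun k => ∑ i ∈ Finset.range k, X i ω) (Finset.mem_Icc.mpr ⟨h1, h2⟩)
  have hsq : ∀ ω, (max (Sbar n ω) 0 / Real.sqrt n) ^ 2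
      = Stmt19Aux.M n (fun i => X i ω) ^ 2 / n := fun ω => by
    rw [hmax, div_pow, Real.sq_sqrt hn0.le]
  simp_rw [hsq]
  have hXm : Measurable fun ω => Stmt19Aux.M n (fun i => X i ω) ^ 2 / n :=
    (((Stmt19Aux.measurable_M n).comp (measurable_pi_lambda _ hmeas)).pow_const 2).div_const _
  rw [← integral_indicator (measurableSet_lt measurable_const hXm)]
  have hbd : ∀ ω, Set.indicator {ω | Stmt19Aux.M n (fun i => X i ω) ^ 2 / n > K}
      (fun ω => Stmt19Aux.M n (fun i => X i ω) ^ 2 / n) ω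
      ≤ (16 / (K * n ^ 2)) * Stmt19Aux.M n (fun i => Y i ω) ^ 4
        + (4 / n) * Stmt19Aux.M n (fun i => Z i ω) ^ 2 := by
    intro ω
    have hle : Stmt19Aux.M n (fun i => X i ω)
        ≤ Stmt19Aux.M n (fun i => Y i ω) + Stmt19Aux.M n (fun i => Z i ω) := by
      have h := Stmt19Aux.M_add_le n (fun i => Y i ω) (fun i => Z i ω)
      have e : (fun i => Y i ω + Z i ω) = fun i => X i ω := by
        funext i
        simp only [Y, Z, φ, ψ]
        linarith [hab (X i ω)]
      rwa [e] at h
    have p1 := Stmt19Aux.M_nonneg n (fun i => X i ω)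
    have p2 := Stmt19Aux.M_nonneg n (fun i => Y i ω)
    have p3 := Stmt19Aux.M_nonneg n (fun i => Z i ω)
    by_cases hω : ω ∈ {ω | Stmt19Aux.M n (fun i => X i ω) ^ 2 / n > K}
    · rw [Set.indicator_of_mem hω]
      simp only [Set.mem_ofPred_eq] at hω
      generalize Stmt19Aux.M n (fun i => X i ω) = x at *
      generalize Stmt19Aux.M n (fun i => Y i ω) = y at *
      generalize Stmt19Aux.M n (fun i => Z i ω) = z at *
      rcases le_total z y with h | h
      · have h1 : x ^ 4 ≤ (2 * y) ^ 4 := pow_le_pow_left₀ p1 (by linarith) 4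
        have h2 : x ^ 2 / n ≤ (x ^ 2 / n) ^ 2 / K := by
          rw [le_div_iff₀ hKpos]
          nlinarith
        have h3 : (x ^ 2 / n) ^ 2 / K = x ^ 4 / (K * n ^ 2) := by
          field_simp
        have h4 : x ^ 4 / (K * n ^ 2) ≤ (2 * y) ^ 4 / (K * n ^ 2) := by gcongr
        have h5 : (2 * y) ^ 4 / (K * n ^ 2) = 16 / (K * n ^ 2) * y ^ 4 := by ring
        have h6 : 0 ≤ 4 / (n : ℝ) * z ^ 2 := by positivity
        linarith
      · have h1 : x ^ 2 ≤ (2 * z) ^ 2 := pow_le_pow_left₀ p1 (by linarith) 2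
        have h4 : x ^ 2 / n ≤ (2 * z) ^ 2 / n := by gcongr
        have h5 : (2 * z) ^ 2 / n = 4 / n * z ^ 2 := by ring
        have h6 : 0 ≤ 16 / (K * n ^ 2) * y ^ 4 := by positivity
        linarith
    · rw [Set.indicator_of_notMem hω]
      positivity
  refine (integral_mono_of_nonneg (ae_of_all _ fun ω =>
    Set.indicator_nonneg (fun ω _ => by positivity) ω)
    ((iY.const_mul _).add (iZ.const_mul _)) (ae_of_all _ hbd)).trans ?_
  simp only [Pi.add_apply]
  rw [integral_add (iY.const_mul _) (iZ.const_mul _), integral_const_mul, integral_const_mul]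
  have e1 : 16 / (K * n ^ 2) * ∫ ω, Stmt19Aux.M n (fun i => Y i ω) ^ 4 ∂ℙ
      ≤ 16 / (K * n ^ 2) * (C * n ^ 2) := by gcongr
  have e2 : 4 / (n : ℝ) * ∫ ω, Stmt19Aux.M n (fun i => Z i ω) ^ 2 ∂ℙ
      ≤ 4 / n * (4 * (n * (ε / 32))) := by gcongr
  have e3 : 16 / (K * n ^ 2) * (C * n ^ 2) = 16 * C / K := by field_simp
  have e4 : 4 / (n : ℝ) * (4 * (n * (ε / 32))) = ε / 2 := by field_simp; norm_num
  have e5 : 16 * C / K ≤ ε / 2 := by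
    rw [div_le_iff₀ hKpos, hK]
    field_simp
    linarith
  linarith
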